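/- Let R be a commutative ring, 𝔗 a half centered torsion theory over R, 𝔞 a finitely generated ideal of R, and M a weakly Laskerian R-module. Then 𝔗-cgrade_R(𝔞,M) = 𝔗-Kgrade_R(𝔞,M). -/

import Mathlib

open CategoryTheory

universe u

noncomputable section

/-- A torsion theory over `R`: a class of `R`-modules closed under isomorphism, submodules,
quotient modules, extensions, and directed colimits (formulated as closure under directed
unions of submodules). -/
structure IsTorsionTheory (R : Type u) [CommRing R] (T : Set (ModuleCat.{u} R)) : Prop where
  mem_of_iso : ∀ {N N' : ModuleCat.{u} R}, (N ≅ N') → N ∈ T → N' ∈ T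
  submodule_mem : ∀ {N : ModuleCat.{u} R}, N ∈ T → ∀ S : Submodule R N,
    ModuleCat.of R S ∈ T
  quotient_mem : ∀ {N : ModuleCat.{u} R}, N ∈ T → ∀ S : Submodule R N,
    ModuleCat.of R (N ⧸ S) ∈ T
  ext_mem : ∀ {N : ModuleCat.{u} R} (S : Submodule R N),
    ModuleCat.of R S ∈ T → ModuleCat.of R (N ⧸ S) ∈ T → N ∈ T
  directed_mem : ∀ {N : ModuleCat.{u} R} {ι : Type u} [Nonempty ι] (S : ι → Submodule R N),
    Directed (· ≤ ·) S → (∀ i, ModuleCat.of R (S i) ∈ T) → iSup S = ⊤ → N ∈ T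

variable {R : Type u} [CommRing R]

/-- The "outgoing" differential of the Koszul cocomplex `Hom_R(K_•(x), M)`, whose degree `i`
component is indexed by the `i`-element subsets of `{1, …, r}`. -/
def koszulDiff {r : ℕ} (x : Fin r → R) (M : Type u) [AddCommGroup M] [Module R M] (i : ℕ) :
    ({s : Finset (Fin r) // s.card = i} → M) →ₗ[R]
      ({s : Finset (Fin r) // s.card = i + 1} → M) where
  toFun φ t := ∑ j ∈ t.1.attach,
    ((-1 : R) ^ (t.1.filter (fun k => k < j.1)).card * x j.1) •
      φ ⟨t.1.erase j.1, by simp [Finset.card_erase_of_mem j.2, t.2]⟩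
  map_add' φ ψ := by
    funext t
    simp [Finset.sum_add_distrib, smul_add]
  map_smul' c φ := by
    funext t
    simp [Finset.smul_sum, smul_comm c]

/-- The "incoming" differential of the Koszul cocomplex in degree `i`
(its source is trivial when `i = 0`). -/
def koszulDiffIn {r : ℕ} (x : Fin r → R) (M : Type u) [AddCommGroup M] [Module R M] (i : ℕ) :
    ({s : Finset (Fin r) // s.card + 1 = i} → M) →ₗ[R]
      ({s : Finset (Fin r) // s.card = i} → M) where
  toFun φ t := ∑ j ∈ t.1.attach,
    ((-1 : R) ^ (t.1.filter (fun k => k < j.1)).card * x j.1) •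
      φ ⟨t.1.erase j.1, by rw [Finset.card_erase_add_one j.2]; exact t.2⟩
  map_add' φ ψ := by
    funext t
    simp [Finset.sum_add_distrib, smul_add]
  map_smul' c φ := by
    funext t
    simp [Finset.smul_sum, smul_comm c]

/-- The `i`-th Koszul cohomology `H^i(x; M)` of `M` with respect to `x₁, …, x_r`, i.e. the
`i`-th cohomology of the cocomplex `Hom_R(K_•(x), M)`. -/
abbrev koszulCohomology {r : ℕ} (x : Fin r → R) (M : Type u) [AddCommGroup M] [Module R M]
    (i : ℕ) : Type u :=
  ↥(LinearMap.ker (koszulDiff x M i)) ⧸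
    (Submodule.comap (LinearMap.ker (koszulDiff x M i)).subtype
      (LinearMap.range (koszulDiffIn x M i)))

/-- The `𝔗`-Koszul grade of the ideal `(x₁, …, x_r)` on `M`: the infimum of the set of `i`
such that `H^i(x; M) ∉ 𝔗` (with `inf ∅ = +∞`). -/
def TKgrade (T : Set (ModuleCat.{u} R)) {r : ℕ} (x : Fin r → R) (M : Type u)
    [AddCommGroup M] [Module R M] : ℕ∞ :=
  sInf ((↑· : ℕ → ℕ∞) '' {i | ModuleCat.of R (koszulCohomology x M i) ∉ T})

/-- `x₁, …, x_n` is a weak `M`-regular sequence with respect to `𝔗` if the module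
`((x₁,…,x_{i-1})M :_M x_i) / (x₁,…,x_{i-1})M` belongs to `𝔗` for all `i = 1, …, n`. -/
def IsWeakRegularSeqWrt (T : Set (ModuleCat.{u} R)) {n : ℕ} (x : Fin n → R) (M : Type u)
    [AddCommGroup M] [Module R M] : Prop :=
  ∀ i : Fin n,
    ModuleCat.of R
      ↥(Submodule.map (Ideal.span (x '' {j | j < i}) • (⊤ : Submodule R M)).mkQ
        (Submodule.comap (LinearMap.lsmul R M (x i))
          (Ideal.span (x '' {j | j < i}) • (⊤ : Submodule R M)))) ∈ T

/-- The `𝔗`-classical grade of `𝔞` on `M`: the supremum of the lengths of weak `M`-regular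
sequences with respect to `𝔗` consisting of elements of `𝔞`. -/
def Tcgrade (T : Set (ModuleCat.{u} R)) (a : Ideal R) (M : Type u)
    [AddCommGroup M] [Module R M] : ℕ∞ :=
  sSup ((↑· : ℕ → ℕ∞) ''
    {n | ∃ x : Fin n → R, (∀ i, x i ∈ a) ∧ IsWeakRegularSeqWrt T x M})

/-- A torsion theory `𝔗` is half centered if every module `N` such that `R/𝔭 ∈ 𝔗` for all
primes `𝔭` in the support of `N` itself belongs to `𝔗`. -/
def IsHalfCentered {R : Type u} [CommRing R] (T : Set (ModuleCat.{u} R)) : Prop :=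
  ∀ N : ModuleCat.{u} R,
    (∀ p ∈ Module.support R N, ModuleCat.of R (R ⧸ p.asIdeal) ∈ T) → N ∈ T

/-- The weakly associated primes of `M`: the primes that are minimal over the annihilator
`(0 :_R m)` of some `m ∈ M`. -/
def weakAssocPrimes (R : Type u) [CommRing R] (M : Type u) [AddCommGroup M] [Module R M] :
    Set (Ideal R) :=
  { p | ∃ m : M, p ∈ (Ideal.torsionOf R M m).minimalPrimes }

/-- An `R`-module `M` is weakly Laskerian if every quotient of `M` has only finitely many
weakly associated prime ideals. -/
def IsWeaklyLaskerian (R : Type u) [CommRing R] (M : Type u) [AddCommGroup M]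
    [Module R M] : Prop :=
  ∀ N : Submodule R M, (weakAssocPrimes R (M ⧸ N)).Finite

/-!
A torsion theory is a Serre class, so the long exact sequence of Koszul cohomology can be read
modulo `𝔗`. Let `x ∈ 𝔞` have torsion kernel `(0 :_M x) ∈ 𝔗`. Modulo `𝔗`, multiplication by `x` on
`M` is injective with cokernel `M/xM`, and it is zero on `H^i(y; M)`. Hence `H^i(y; M)` lies in
`𝔗` for `i ≤ n` if and only if `H^i(y; M/xM)` does for `i < n`, which drives an induction in both
directions.

It remains to find `x` when `H^0(y; M) = (0 :_M 𝔞)` lies in `𝔗`. A half centered torsion theory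
detects membership on weakly associated primes. If `𝔞` were contained in a weakly associated prime
`𝔭` of `M`, then `𝔭` would already be weakly associated to `(0 :_M 𝔞)`, as `𝔞` is finitely
generated, and so `R/𝔭 ∈ 𝔗`. By prime avoidance some `x ∈ 𝔞` lies outside the finitely many weakly
associated primes of `M` with `R/𝔭 ∉ 𝔗`, and then `(0 :_M x) ∈ 𝔗`.
-/

section Koszul

variable {r : ℕ}

/-- The sign `(-1)^{#{k ∈ t | k < j}}` with which the basis vector `e_j` enters `e_t`. -/
def koszulSign (R : Type u) [CommRing R] (t : Finset (Fin r)) (j : Fin r) : R :=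
  (-1) ^ (t.filter fun k => k < j).card

lemma koszulSign_mul_self (t : Finset (Fin r)) (j : Fin r) :
    koszulSign R t j * koszulSign R t j = 1 := by
  simp [koszulSign, ← mul_pow]

lemma koszulSign_insert {t : Finset (Fin r)} {k : Fin r} (hk : k ∉ t) (j : Fin r) :
    koszulSign R (insert k t) j = (if k < j then -1 else 1) * koszulSign R t j := by
  unfold koszulSign
  rw [Finset.filter_insert]
  split_ifs
  · rw [Finset.card_insert_of_notMem (by simp [hk]), pow_succ']
  · simp

lemma koszulSign_insert_self {t : Finset (Fin r)} {k : Fin r} (hk : k ∉ t) :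
    koszulSign R (insert k t) k = koszulSign R t k := by
  simp [koszulSign_insert hk]

lemma koszulSign_mul_erase_add {t : Finset (Fin r)} {j k : Fin r} (hj : j ∈ t) (hk : k ∉ t) :
    koszulSign R t j * koszulSign R (t.erase j) k +
      koszulSign R t k * koszulSign R (insert k t) j = 0 := by
  have hsign : koszulSign R t k = (if j < k then -1 else 1) * koszulSign R (t.erase j) k := by
    rw [← koszulSign_insert (Finset.notMem_erase j t), Finset.insert_erase hj]
  rw [koszulSign_insert hk, hsign]
  rcases lt_or_gt_of_ne (ne_of_mem_of_not_mem hj hk) with h | h <;>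
    simp only [h, h.not_gt, if_true, if_false] <;> ring

variable (y : Fin r → R) (M : Type u) [AddCommGroup M] [Module R M]

/-- The Koszul differential on cochains of all degrees at once, which avoids the subtypes of subsets
of fixed cardinality. -/
def koszulTotalDiff : (Finset (Fin r) → M) →ₗ[R] (Finset (Fin r) → M) where
  toFun φ t := ∑ j ∈ t, (koszulSign R t j * y j) • φ (t.erase j)
  map_add' φ ψ := by
    funext t
    simp [Finset.sum_add_distrib]
  map_smul' c φ := by
    funext t
    simp [Finset.smul_sum, smul_comm c]

variable (R) in
/-- Contraction of Koszul cochains along the basis vector `e_k`. -/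
def koszulTotalContraction (k : Fin r) : (Finset (Fin r) → M) →ₗ[R] (Finset (Fin r) → M) where
  toFun φ t := if k ∈ t then 0 else koszulSign R t k • φ (insert k t)
  map_add' φ ψ := by
    funext t
    by_cases hk : k ∈ t <;> simp [hk]
  map_smul' c φ := by
    funext t
    by_cases hk : k ∈ t <;> simp [hk, smul_comm c]

variable {M}

lemma koszulTotalDiff_apply (φ : Finset (Fin r) → M) (t : Finset (Fin r)) :
    koszulTotalDiff y M φ t = ∑ j ∈ t, (koszulSign R t j * y j) • φ (t.erase j) := rfl

lemma koszulTotalDiff_insert {t : Finset (Fin r)} {k : Fin r} (hk : k ∉ t)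
    (φ : Finset (Fin r) → M) :
    koszulTotalDiff y M φ (insert k t) = (koszulSign R t k * y k) • φ t +
      ∑ j ∈ t, (koszulSign R (insert k t) j * y j) • φ (insert k (t.erase j)) := by
  rw [koszulTotalDiff_apply, Finset.sum_insert hk, koszulSign_insert_self hk,
    Finset.erase_insert hk]
  refine congrArg _ (Finset.sum_congr rfl fun j hj => ?_)
  rw [Finset.erase_insert_of_ne (ne_of_mem_of_not_mem hj hk).symm]

lemma koszulTotalContraction_of_mem {t : Finset (Fin r)} {k : Fin r} (hk : k ∈ t)
    (φ : Finset (Fin r) → M) : koszulTotalContraction R M k φ t = 0 :=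
  if_pos hk

lemma koszulTotalContraction_of_notMem {t : Finset (Fin r)} {k : Fin r} (hk : k ∉ t)
    (φ : Finset (Fin r) → M) :
    koszulTotalContraction R M k φ t = koszulSign R t k • φ (insert k t) :=
  if_neg hk

lemma koszulTotalDiff_contraction_add (k : Fin r) (φ : Finset (Fin r) → M) :
    koszulTotalDiff y M (koszulTotalContraction R M k φ) +
      koszulTotalContraction R M k (koszulTotalDiff y M φ) = y k • φ := by
  funext t
  rw [Pi.add_apply, Pi.smul_apply]
  by_cases hk : k ∈ t
  · obtain ⟨s, hks, rfl⟩ : ∃ s, k ∉ s ∧ insert k s = t :=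
      ⟨t.erase k, Finset.notMem_erase k t, Finset.insert_erase hk⟩
    have hsum : ∀ j ∈ s, (koszulSign R (insert k s) j * y j) •
        koszulTotalContraction R M k φ (insert k (s.erase j)) = 0 := fun j _ => by
      rw [koszulTotalContraction_of_mem (Finset.mem_insert_self k _), smul_zero]
    rw [koszulTotalContraction_of_mem hk, add_zero, koszulTotalDiff_insert y hks,
      Finset.sum_eq_zero hsum, add_zero, koszulTotalContraction_of_notMem hks, smul_smul,
      mul_right_comm, koszulSign_mul_self, one_mul]
  · have hsum : ∀ j ∈ t, (koszulSign R t j * y j) • koszulTotalContraction R M k φ (t.erase j) +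
        koszulSign R t k • (koszulSign R (insert k t) j * y j) • φ (insert k (t.erase j)) = 0 := by
      intro j hj
      rw [koszulTotalContraction_of_notMem (mt Finset.mem_of_mem_erase hk), smul_smul, smul_smul,
        ← add_smul, mul_right_comm, ← mul_assoc, ← add_mul, koszulSign_mul_erase_add hj hk,
        zero_mul, zero_smul]
    rw [koszulTotalContraction_of_notMem hk, koszulTotalDiff_insert y hk, smul_add,
      Finset.smul_sum, add_left_comm, koszulTotalDiff_apply, ← Finset.sum_add_distrib,
      Finset.sum_eq_zero hsum, add_zero, smul_smul, ← mul_assoc, koszulSign_mul_self, one_mul]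

lemma koszulTotalDiff_comp_self : koszulTotalDiff y M ∘ₗ koszulTotalDiff y M = 0 := by
  -- `d²` commutes with every contraction because `d` commutes with the homotopy `dι + ιd = y_k`.
  have hcomm (k : Fin r) (φ : Finset (Fin r) → M) :
      koszulTotalContraction R M k (koszulTotalDiff y M (koszulTotalDiff y M φ)) =
        koszulTotalDiff y M (koszulTotalDiff y M (koszulTotalContraction R M k φ)) := by
    have h := congrArg (koszulTotalDiff y M) (koszulTotalDiff_contraction_add y k φ)
    rw [map_add, map_smul, ← koszulTotalDiff_contraction_add y k (koszulTotalDiff y M φ),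
      add_comm] at h
    exact (add_left_cancel h).symm
  refine LinearMap.ext fun φ => funext fun t => ?_
  rw [LinearMap.comp_apply, LinearMap.zero_apply, Pi.zero_apply]
  induction t using Finset.induction_on generalizing φ with
  | empty => rw [koszulTotalDiff_apply, Finset.sum_empty]
  | insert k t hk ih =>
    have h := congrFun (hcomm k φ) t
    rw [ih, koszulTotalContraction_of_notMem hk] at h
    rw [← one_smul R (koszulTotalDiff y M _ _), ← koszulSign_mul_self t k, mul_smul, h, smul_zero]

lemma restrict_surjective (q : Finset (Fin r) → Prop) :
    Function.Surjective (LinearMap.funLeft R M (Subtype.val : {s // q s} → Finset (Fin r))) :=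
  LinearMap.funLeft_surjective_of_injective R M _ Subtype.val_injective

variable (M) in
lemma koszulDiff_comp_restrict (i : ℕ) :
    koszulDiff y M i ∘ₗ LinearMap.funLeft R M Subtype.val =
      LinearMap.funLeft R M Subtype.val ∘ₗ koszulTotalDiff y M :=
  LinearMap.ext fun φ => funext fun t =>
    Finset.sum_attach t.1 fun j => (koszulSign R t.1 j * y j) • φ (t.1.erase j)

variable (M) in
lemma koszulDiffIn_comp_restrict (i : ℕ) :
    koszulDiffIn y M i ∘ₗ LinearMap.funLeft R M Subtype.val =
      LinearMap.funLeft R M Subtype.val ∘ₗ koszulTotalDiff y M :=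
  LinearMap.ext fun φ => funext fun t =>
    Finset.sum_attach t.1 fun j => (koszulSign R t.1 j * y j) • φ (t.1.erase j)

variable (M) in
lemma koszulDiff_comp_koszulDiff (i : ℕ) : koszulDiff y M (i + 1) ∘ₗ koszulDiff y M i = 0 := by
  rw [← LinearMap.cancel_right (restrict_surjective fun s : Finset (Fin r) => s.card = i),
    LinearMap.comp_assoc, koszulDiff_comp_restrict, ← LinearMap.comp_assoc,
    koszulDiff_comp_restrict, LinearMap.comp_assoc, koszulTotalDiff_comp_self,
    LinearMap.comp_zero, LinearMap.zero_comp]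

lemma range_koszulDiffIn_zero : LinearMap.range (koszulDiffIn y M 0) = ⊥ := by
  have h : koszulDiffIn y M 0 = 0 := by
    refine LinearMap.ext fun φ => funext fun ⟨t, ht⟩ => ?_
    obtain rfl := Finset.card_eq_zero.1 ht
    rfl
  rw [h, LinearMap.range_zero]

lemma range_koszulDiffIn_succ (i : ℕ) :
    LinearMap.range (koszulDiffIn y M (i + 1)) = LinearMap.range (koszulDiff y M i) := by
  rw [← LinearMap.range_comp_of_range_eq_top _ (LinearMap.range_eq_top.2
      (restrict_surjective fun s : Finset (Fin r) => s.card + 1 = i + 1)),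
    ← LinearMap.range_comp_of_range_eq_top _ (LinearMap.range_eq_top.2
      (restrict_surjective fun s : Finset (Fin r) => s.card = i)),
    koszulDiff_comp_restrict, koszulDiffIn_comp_restrict]

lemma smul_koszulCohomology_eq_zero {x : R} (hx : x ∈ Ideal.span (Set.range y)) {i : ℕ}
    (z : koszulCohomology y M i) : x • z = 0 := by
  have hle : Ideal.span (Set.range y) ≤ Module.annihilator R (koszulCohomology y M i) := by
    rw [Ideal.span_le]
    rintro _ ⟨k, rfl⟩
    refine Module.mem_annihilator.2 fun z => ?_
    obtain ⟨⟨φ, hφ⟩, rfl⟩ := Submodule.mkQ_surjective _ z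
    obtain ⟨Φ, rfl⟩ := restrict_surjective (R := R) _ φ
    rw [LinearMap.mem_ker, ← LinearMap.comp_apply, koszulDiff_comp_restrict] at hφ
    rw [← map_smul, Submodule.mkQ_apply, Submodule.Quotient.mk_eq_zero]
    refine ⟨LinearMap.funLeft R M Subtype.val (koszulTotalContraction R M k Φ), ?_⟩
    rw [← LinearMap.comp_apply, koszulDiffIn_comp_restrict]
    funext t
    have hcontr : koszulTotalContraction R M k (koszulTotalDiff y M Φ) t = 0 := by
      by_cases hk : k ∈ t.1
      · exact koszulTotalContraction_of_mem hk _
      · rw [koszulTotalContraction_of_notMem hk]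
        have := congrFun hφ ⟨insert k t.1, by rw [Finset.card_insert_of_notMem hk, t.2]⟩
        exact (congrArg _ this).trans (smul_zero _)
    have := congrFun (koszulTotalDiff_contraction_add y k Φ) t
    rw [Pi.add_apply, hcontr, add_zero] at this
    exact this
  exact Module.mem_annihilator.1 (hle hx) z

end Koszul

section KoszulComplex
open Limits

variable {r : ℕ} (y : Fin r → R)

lemma koszulDiff_comp_compLeft {M N : Type u} [AddCommGroup M] [Module R M] [AddCommGroup N]
    [Module R N] (f : M →ₗ[R] N) (i : ℕ) :
    koszulDiff y N i ∘ₗ f.compLeft _ = f.compLeft _ ∘ₗ koszulDiff y M i := by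
  refine LinearMap.ext fun φ => funext fun t => ?_
  simp [koszulDiff]

/-- The Koszul cocomplex `Hom_R(K_•(y), M)`, as a functor of `M`. -/
def koszulComplex : ModuleCat.{u} R ⥤ CochainComplex (ModuleCat.{u} R) ℕ where
  obj M := CochainComplex.of (fun i => ModuleCat.of R ({s : Finset (Fin r) // s.card = i} → M))
    (fun i => ModuleCat.ofHom (koszulDiff y M i))
    fun i => ModuleCat.hom_ext (koszulDiff_comp_koszulDiff y M i)
  map f := CochainComplex.ofHom (fun _ => ModuleCat.ofHom (f.hom.compLeft _))
    fun i => by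
      dsimp only
      rw [CochainComplex.of_d, CochainComplex.of_d]
      exact ModuleCat.hom_ext (koszulDiff_comp_compLeft y f.hom i)

lemma koszulComplex_d_succ (M : ModuleCat.{u} R) (i : ℕ) :
    ((koszulComplex y).obj M).d i (i + 1) = ModuleCat.ofHom (koszulDiff y M i) :=
  CochainComplex.of_d (fun i => ModuleCat.of R ({s : Finset (Fin r) // s.card = i} → M))
    (fun i => ModuleCat.ofHom (koszulDiff y M i)) i

instance : (koszulComplex y).PreservesZeroMorphisms where

lemma map_koszulComplex_shortExact {S : ShortComplex (ModuleCat.{u} R)} (hS : S.ShortExact) :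
    (S.map (koszulComplex y)).ShortExact := by
  refine HomologicalComplex.shortExact_of_degreewise_shortExact _ fun i => ?_
  have hexact : Function.Exact (S.f.hom.compLeft {s : Finset (Fin r) // s.card = i})
      (S.g.hom.compLeft {s : Finset (Fin r) // s.card = i}) := by
    rw [LinearMap.exact_iff, LinearMap.ker_compLeft, LinearMap.range_compLeft,
      hS.exact.moduleCat_range_eq_ker]
  exact ModuleCat.shortComplex_shortExact _ hexact hS.moduleCat_injective_f.comp_left
    hS.moduleCat_surjective_g.comp_left

/-- Koszul cohomology as a functor on `R`-modules. -/
def koszulHomology (i : ℕ) : ModuleCat.{u} R ⥤ ModuleCat.{u} R :=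
  koszulComplex y ⋙ HomologicalComplex.homologyFunctor _ _ i

lemma nonempty_homology_iso (S : ShortComplex (ModuleCat.{u} R)) {Z B : Submodule R S.X₂}
    (hZ : LinearMap.ker S.g.hom = Z) (hB : LinearMap.range S.f.hom = B) :
    Nonempty (S.homology ≅ ModuleCat.of R (Z ⧸ B.comap Z.subtype)) := by
  subst hZ hB
  refine ⟨S.moduleCatHomologyIso ≪≫ (Submodule.quotEquivOfEq _ _ ?_).toModuleIso⟩
  ext z
  exact ⟨fun ⟨w, hw⟩ => ⟨w, congrArg Subtype.val hw⟩, fun ⟨w, hw⟩ => ⟨w, Subtype.ext hw⟩⟩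

lemma range_koszulComplex_d_prev (M : ModuleCat.{u} R) (i : ℕ) :
    LinearMap.range (((koszulComplex y).obj M).d ((ComplexShape.up ℕ).prev i) i).hom =
      LinearMap.range (koszulDiffIn y M i) := by
  cases i with
  | zero =>
    rw [range_koszulDiffIn_zero, CochainComplex.prev_nat_zero,
      HomologicalComplex.shape _ _ _ (Nat.succ_ne_self 0), ModuleCat.hom_zero,
      LinearMap.range_zero]
    rfl
  | succ i =>
    rw [range_koszulDiffIn_succ, CochainComplex.prev_nat_succ, koszulComplex_d_succ]
    rfl

lemma nonempty_koszulHomology_iso (M : ModuleCat.{u} R) (i : ℕ) :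
    Nonempty ((koszulHomology y i).obj M ≅ ModuleCat.of R (koszulCohomology y M i)) := by
  refine nonempty_homology_iso (((koszulComplex y).obj M).sc i) ?_
    (range_koszulComplex_d_prev y M i)
  change LinearMap.ker (((koszulComplex y).obj M).d i ((ComplexShape.up ℕ).next i)).hom = _
  rw [CochainComplex.next, koszulComplex_d_succ]
  rfl

lemma koszulHomology_map_smul_id (N : ModuleCat.{u} R) (i : ℕ) (x : R) :
    (koszulHomology y i).map (x • 𝟙 N) = x • 𝟙 ((koszulHomology y i).obj N) := by
  have h : (koszulComplex y).map (x • 𝟙 N) = x • 𝟙 ((koszulComplex y).obj N) := rfl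
  rw [koszulHomology, Functor.comp_map, h]
  refine (ShortComplex.homologyMap_smul (𝟙 (((koszulComplex y).obj N).sc i)) x).trans ?_
  rw [ShortComplex.homologyMap_id]
  rfl

lemma koszulHomology_map_smul_id_eq_zero (N : ModuleCat.{u} R) (i : ℕ) {x : R}
    (hx : x ∈ Ideal.span (Set.range y)) : (koszulHomology y i).map (x • 𝟙 N) = 0 := by
  obtain ⟨e⟩ := nonempty_koszulHomology_iso y N i
  have h : x • 𝟙 (ModuleCat.of R (koszulCohomology y N i)) = 0 :=
    ModuleCat.hom_ext (LinearMap.ext (smul_koszulCohomology_eq_zero y hx))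
  rw [koszulHomology_map_smul_id, ← e.hom_inv_id, ← Category.comp_id e.hom, Category.assoc,
    ← Linear.comp_smul, ← Linear.smul_comp, h, zero_comp, comp_zero]

end KoszulComplex

section SerreClass
open Limits

variable {P : ObjectProperty (ModuleCat.{u} R)} [P.IsSerreClass]

lemma prop_of_injective {N N' : Type u} [AddCommGroup N] [Module R N] [AddCommGroup N']
    [Module R N'] {f : N →ₗ[R] N'} (hf : Function.Injective f) (h : P (ModuleCat.of R N')) :
    P (ModuleCat.of R N) :=
  have : Mono (ModuleCat.ofHom f) := (ModuleCat.mono_iff_injective _).2 hf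
  P.prop_of_mono (ModuleCat.ofHom f) h

lemma prop_of_surjective {N N' : Type u} [AddCommGroup N] [Module R N] [AddCommGroup N']
    [Module R N'] {f : N →ₗ[R] N'} (hf : Function.Surjective f) (h : P (ModuleCat.of R N)) :
    P (ModuleCat.of R N') :=
  have : Epi (ModuleCat.ofHom f) := (ModuleCat.epi_iff_surjective _).2 hf
  P.prop_of_epi (ModuleCat.ofHom f) h

lemma prop_pi {K : Type u} [AddCommGroup K] [Module R K] (hK : P (ModuleCat.of R K))
    (ι : Type) [Finite ι] : P (ModuleCat.of R (ι → K)) := by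
  induction ι using Finite.induction_empty_option with
  | of_equiv e h => exact P.prop_of_iso (LinearEquiv.funCongrLeft R K e.symm).toModuleIso h
  | h_empty => exact P.prop_of_isZero (ModuleCat.isZero_of_subsingleton _)
  | @h_option ι _ h =>
    exact P.prop_of_iso (ModuleCat.biprodIsoProd _ _ ≪≫
      (LinearEquiv.piOptionEquivProd (M := fun _ : Option ι => K) R).symm.toModuleIso)
      (P.prop_biprod hK h)

lemma monoModSerre_of_exact {C : Type*} [Category* C] [Abelian C] {P : ObjectProperty C}
    [P.IsSerreClass] {S : ShortComplex C} (hS : S.Exact) (h₁ : P S.X₁) :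
    P.monoModSerre S.g := by
  have := hS.epi_kernelLift
  exact P.prop_of_epi (kernel.lift S.g S.f S.zero) h₁

lemma shortExact_subtype_mkQ {N : Type u} [AddCommGroup N] [Module R N] (L : Submodule R N) :
    (ShortComplex.mk (ModuleCat.ofHom L.subtype) (ModuleCat.ofHom L.mkQ)
      (ModuleCat.hom_ext (LinearMap.exact_subtype_mkQ L).linearMap_comp_eq_zero)).ShortExact :=
  ModuleCat.shortComplex_shortExact _ (LinearMap.exact_subtype_mkQ L) L.injective_subtype
    L.mkQ_surjective

lemma exact_ker_subtype_rangeRestrict {N N' : Type*} [AddCommGroup N] [Module R N]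
    [AddCommGroup N'] [Module R N'] (f : N →ₗ[R] N') :
    Function.Exact (LinearMap.ker f).subtype f.rangeRestrict := by
  rw [LinearMap.exact_iff, LinearMap.ker_rangeRestrict, Submodule.range_subtype]

lemma shortExact_ker_range {N N' : Type u} [AddCommGroup N] [Module R N] [AddCommGroup N']
    [Module R N'] (f : N →ₗ[R] N') :
    (ShortComplex.mk (ModuleCat.ofHom (LinearMap.ker f).subtype) (ModuleCat.ofHom f.rangeRestrict)
      (ModuleCat.hom_ext (exact_ker_subtype_rangeRestrict f).linearMap_comp_eq_zero)).ShortExact :=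
  ModuleCat.shortComplex_shortExact _ (exact_ker_subtype_rangeRestrict f)
    (Submodule.injective_subtype _) f.surjective_rangeRestrict

variable {r : ℕ} (y : Fin r → R)

lemma prop_koszulHomology {N : ModuleCat.{u} R} (hN : P N) (i : ℕ) :
    P ((koszulHomology y i).obj N) := by
  obtain ⟨e⟩ := nonempty_koszulHomology_iso y N i
  refine P.prop_of_iso e.symm (prop_of_surjective (Submodule.mkQ_surjective _) ?_)
  exact prop_of_injective (Submodule.injective_subtype _) (prop_pi hN _)

section ShortExact

variable {S : ShortComplex (ModuleCat.{u} R)} (hS : S.ShortExact)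
include hS

lemma monoModSerre_koszulHomology_map_g (h : P S.X₁) (i : ℕ) :
    P.monoModSerre ((koszulHomology y i).map S.g) :=
  monoModSerre_of_exact ((map_koszulComplex_shortExact y hS).homology_exact₂ i)
    (prop_koszulHomology y h i)

lemma monoModSerre_koszulHomology_map_f {i : ℕ}
    (h : ∀ j, j + 1 = i → P ((koszulHomology y j).obj S.X₃)) :
    P.monoModSerre ((koszulHomology y i).map S.f) := by
  have hKS := map_koszulComplex_shortExact y hS
  cases i with
  | zero =>
    have : Mono ((koszulComplex y).map S.f) := hKS.mono_f
    have : Mono ((koszulHomology y 0).map S.f) :=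
      HomologicalComplex.mono_homologyMap_of_mono_of_not_rel _ 0 (by simp)
    exact P.monoModSerre_of_mono _
  | succ j => exact monoModSerre_of_exact (hKS.homology_exact₁ j (j + 1) rfl) (h j rfl)

lemma prop_koszulHomology_X₃ {i : ℕ} (h₂ : P ((koszulHomology y i).obj S.X₂))
    (h₁ : P ((koszulHomology y (i + 1)).obj S.X₁)) : P ((koszulHomology y i).obj S.X₃) :=
  P.prop_X₂_of_exact ((map_koszulComplex_shortExact y hS).homology_exact₃ i (i + 1) rfl) h₂ h₁

end ShortExact

section Range

variable {N N' : Type u} [AddCommGroup N] [Module R N] [AddCommGroup N'] [Module R N']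
  {f : N →ₗ[R] N'} (hker : P (ModuleCat.of R (LinearMap.ker f)))
include hker

lemma monoModSerre_koszulHomology_map {i : ℕ} (hcoker : ∀ j, j + 1 = i →
      P ((koszulHomology y j).obj (ModuleCat.of R (N' ⧸ LinearMap.range f)))) :
    P.monoModSerre ((koszulHomology y i).map (ModuleCat.ofHom f)) := by
  have h := P.monoModSerre.comp_mem _ _
    (monoModSerre_koszulHomology_map_g y (shortExact_ker_range f) hker i)
    (monoModSerre_koszulHomology_map_f y (shortExact_subtype_mkQ (LinearMap.range f)) hcoker)
  rwa [← Functor.map_comp] at h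

lemma prop_koszulHomology_coker {i : ℕ}
    (hN : P ((koszulHomology y (i + 1)).obj (ModuleCat.of R N)))
    (hN' : P ((koszulHomology y i).obj (ModuleCat.of R N'))) :
    P ((koszulHomology y i).obj (ModuleCat.of R (N' ⧸ LinearMap.range f))) :=
  prop_koszulHomology_X₃ y (shortExact_subtype_mkQ (LinearMap.range f)) hN'
    (prop_koszulHomology_X₃ y (shortExact_ker_range f) hN (prop_koszulHomology y hker _))

end Range

section Smul
open scoped Pointwise

variable {N : Type u} [AddCommGroup N] [Module R N] {x : R}

lemma range_lsmul_eq : LinearMap.range (LinearMap.lsmul R N x) = x • (⊤ : Submodule R N) :=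
  LinearMap.range_eq_map _

-- Multiplication by `x` is zero on Koszul cohomology, so it can only be injective modulo `P` there
-- if the cohomology itself lies in `P`.
lemma prop_koszulHomology_of_torsionBy_of_quotSMulTop (hxy : x ∈ Ideal.span (Set.range y))
    (htors : P (ModuleCat.of R (Submodule.torsionBy R N x))) {i : ℕ}
    (hquot : ∀ j, j + 1 = i →
      P ((koszulHomology y j).obj (ModuleCat.of R (QuotSMulTop x N)))) :
    P ((koszulHomology y i).obj (ModuleCat.of R N)) := by
  have h : P.monoModSerre ((koszulHomology y i).map (x • 𝟙 (ModuleCat.of R N))) :=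
    monoModSerre_koszulHomology_map y (f := LinearMap.lsmul R N x) htors
      (by rwa [range_lsmul_eq])
  rw [koszulHomology_map_smul_id_eq_zero y _ i hxy] at h
  exact (P.monoModSerre_zero_iff _ _).1 h

lemma prop_koszulHomology_quotSMulTop
    (htors : P (ModuleCat.of R (Submodule.torsionBy R N x))) {i : ℕ}
    (h : P ((koszulHomology y i).obj (ModuleCat.of R N)))
    (h' : P ((koszulHomology y (i + 1)).obj (ModuleCat.of R N))) :
    P ((koszulHomology y i).obj (ModuleCat.of R (QuotSMulTop x N))) := by
  have := prop_koszulHomology_coker y (f := LinearMap.lsmul R N x) htors h' h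
  rwa [range_lsmul_eq] at this

end Smul

end SerreClass

section WeakAssocPrimes

lemma exists_notMem_mul_pow_mem_of_mem_minimalPrimes {I p : Ideal R} (hp : p ∈ I.minimalPrimes)
    {c : R} (hc : c ∈ p) : ∃ s ∉ p, ∃ k : ℕ, s * c ^ k ∈ I := by
  have := hp.1.1
  by_contra! h
  have hdisj : Disjoint (I : Set R) ↑(p.primeCompl ⊔ Submonoid.powers c) := by
    refine Set.disjoint_left.2 fun a ha hmem => ?_
    obtain ⟨s, hs, _, ⟨k, rfl⟩, rfl⟩ := Submonoid.mem_sup.1 hmem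
    exact h s hs k ha
  obtain ⟨q, hq, hIq, hqdisj⟩ := Ideal.exists_le_prime_disjoint I _ hdisj
  have hqp : q ≤ p := fun a ha => by
    by_contra hap
    exact Set.disjoint_left.1 hqdisj ha (Submonoid.mem_sup_left hap)
  exact Set.disjoint_left.1 hqdisj (hp.2 ⟨hq, hIq⟩ hqp hc)
    (Submonoid.mem_sup_right (Submonoid.mem_powers c))

variable {M : Type u} [AddCommGroup M] [Module R M]

lemma mem_minimalPrimes_torsionOf_smul {p : Ideal R} {m : M} {b : R}
    (hp : p ∈ (Ideal.torsionOf R M m).minimalPrimes) (hb : Ideal.torsionOf R M (b • m) ≤ p) :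
    p ∈ (Ideal.torsionOf R M (b • m)).minimalPrimes := by
  have hle : Ideal.torsionOf R M m ≤ Ideal.torsionOf R M (b • m) := fun a ha => by
    rw [Ideal.mem_torsionOf_iff] at ha ⊢
    rw [smul_comm, ha, smul_zero]
  exact ⟨⟨hp.1.1, hb⟩, fun q hq => hp.2 ⟨hq.1, hle.trans hq.2⟩⟩

lemma exists_smul_mem_minimalPrimes_torsionOf {p : Ideal R} {m : M}
    (hp : p ∈ (Ideal.torsionOf R M m).minimalPrimes) {c : R} (hc : c ∈ p) :
    ∃ b : R, c • b • m = 0 ∧ p ∈ (Ideal.torsionOf R M (b • m)).minimalPrimes := by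
  classical
  have hprime := hp.1.1
  have hex : ∃ k : ℕ, ∃ s ∉ p, (s * c ^ k) • m = 0 := by
    obtain ⟨s, hs, k, hk⟩ := exists_notMem_mul_pow_mem_of_mem_minimalPrimes hp hc
    exact ⟨k, s, hs, hk⟩
  obtain ⟨s, hs, hsm⟩ := Nat.find_spec hex
  have hmin := fun {k} => Nat.find_min hex (m := k)
  generalize Nat.find hex = k at hsm hmin
  cases k with
  | zero => exact absurd (hp.1.2 (by simpa using hsm)) hs
  | succ k =>
    -- `k + 1` is the least exponent for which some `s ∉ p` kills `c ^ (k + 1) • m`.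
    refine ⟨s * c ^ k, by rw [smul_smul, mul_left_comm, ← pow_succ', hsm],
      mem_minimalPrimes_torsionOf_smul hp fun a ha => ?_⟩
    by_contra hap
    refine hmin k.lt_succ_self ⟨a * s, hprime.mul_notMem hap hs, ?_⟩
    rwa [Ideal.mem_torsionOf_iff, smul_smul, ← mul_assoc] at ha

lemma exists_torsionBySet_mem_minimalPrimes_torsionOf {p : Ideal R} (hp : p ∈ weakAssocPrimes R M)
    {s : Set R} (hs : s.Finite) (hsp : s ⊆ p) :
    ∃ m ∈ Submodule.torsionBySet R M s, p ∈ (Ideal.torsionOf R M m).minimalPrimes := by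
  induction s, hs using Set.Finite.induction_on with
  | empty =>
    obtain ⟨m, hm⟩ := hp
    exact ⟨m, by simp, hm⟩
  | @insert c s _ _ ih =>
    obtain ⟨m, hms, hm⟩ := ih ((Set.subset_insert c s).trans hsp)
    obtain ⟨b, hcb, hb⟩ := exists_smul_mem_minimalPrimes_torsionOf hm (hsp (Set.mem_insert c s))
    refine ⟨b • m, (Submodule.mem_torsionBySet_iff _ _).2 ?_, hb⟩
    rintro ⟨a, rfl | ha⟩
    · exact hcb
    · exact (Submodule.mem_torsionBySet_iff _ _).1 (Submodule.smul_mem _ b hms) ⟨a, ha⟩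

lemma torsionOf_map_of_injective {N : Type u} [AddCommGroup N] [Module R N] {f : M →ₗ[R] N}
    (hf : Function.Injective f) (m : M) : Ideal.torsionOf R N (f m) = Ideal.torsionOf R M m := by
  ext a
  rw [Ideal.mem_torsionOf_iff, Ideal.mem_torsionOf_iff, ← map_smul, map_eq_zero_iff f hf]

lemma weakAssocPrimes_subset_of_injective {N : Type u} [AddCommGroup N] [Module R N]
    {f : M →ₗ[R] N} (hf : Function.Injective f) : weakAssocPrimes R M ⊆ weakAssocPrimes R N :=
  fun _ ⟨m, hm⟩ => ⟨f m, by rwa [torsionOf_map_of_injective hf]⟩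

lemma IsWeaklyLaskerian.finite_weakAssocPrimes (hM : IsWeaklyLaskerian R M) :
    (weakAssocPrimes R M).Finite :=
  (hM ⊥).subset (weakAssocPrimes_subset_of_injective
    (Submodule.quotEquivOfEqBot (⊥ : Submodule R M) rfl).symm.injective)

lemma IsWeaklyLaskerian.quotient (hM : IsWeaklyLaskerian R M) (U : Submodule R M) :
    IsWeaklyLaskerian R (M ⧸ U) := by
  intro N
  obtain ⟨L, hUL, rfl⟩ : ∃ L, U ≤ L ∧ L.map U.mkQ = N :=
    ⟨N.comap U.mkQ, Submodule.le_comap_mkQ U N,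
      Submodule.map_comap_eq_of_surjective U.mkQ_surjective N⟩
  exact (hM L).subset (weakAssocPrimes_subset_of_injective
    (Submodule.quotientQuotientEquivQuotient U L hUL).injective)

end WeakAssocPrimes

section TorsionTheory

variable {T : Set (ModuleCat.{u} R)} (hT : IsTorsionTheory R T)
include hT

lemma IsTorsionTheory.isSerreClass (hne : T.Nonempty) :
    ObjectProperty.IsSerreClass (C := ModuleCat.{u} R) (· ∈ T) where
  exists_zero := by
    obtain ⟨N, hN⟩ := hne
    exact ⟨_, ModuleCat.isZero_of_subsingleton _, hT.submodule_mem hN ⊥⟩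
  prop_of_mono f _ h :=
    hT.mem_of_iso (LinearEquiv.ofInjective f.hom
      ((ModuleCat.mono_iff_injective f).1 inferInstance)).symm.toModuleIso
      (hT.submodule_mem h (LinearMap.range f.hom))
  prop_of_epi f _ h :=
    hT.mem_of_iso (f.hom.quotKerEquivOfSurjective
      ((ModuleCat.epi_iff_surjective f).1 inferInstance)).toModuleIso
      (hT.quotient_mem h (LinearMap.ker f.hom))
  prop_X₂_of_shortExact {S} hS h₁ h₃ := by
    refine hT.ext_mem (LinearMap.range S.f.hom)
      (hT.mem_of_iso (LinearEquiv.ofInjective _ hS.moduleCat_injective_f).toModuleIso h₁)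
      (hT.mem_of_iso (LinearEquiv.toModuleIso ?_) h₃)
    exact (Submodule.quotEquivOfEq _ _ hS.exact.moduleCat_range_eq_ker).trans
      (S.g.hom.quotKerEquivOfSurjective hS.moduleCat_surjective_g) |>.symm

lemma IsTorsionTheory.quotient_mem_of_le {I J : Ideal R} (hIJ : I ≤ J)
    (hI : ModuleCat.of R (R ⧸ I) ∈ T) : ModuleCat.of R (R ⧸ J) ∈ T :=
  hT.mem_of_iso (Submodule.quotientQuotientEquivQuotient I J hIJ).toModuleIso
    (hT.quotient_mem hI (Submodule.map I.mkQ J))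

lemma IsTorsionTheory.quotient_mem_of_torsionOf_le {N : Type u} [AddCommGroup N] [Module R N]
    (hN : ModuleCat.of R N ∈ T) {m : N} {p : Ideal R} (hp : Ideal.torsionOf R N m ≤ p) :
    ModuleCat.of R (R ⧸ p) ∈ T :=
  hT.quotient_mem_of_le hp <|
    hT.mem_of_iso (Ideal.quotTorsionOfEquivSpanSingleton R N m).symm.toModuleIso
      (hT.submodule_mem hN (R ∙ m))

variable (hHC : IsHalfCentered T) {M : Type u} [AddCommGroup M] [Module R M]
include hHC

lemma IsHalfCentered.mem_of_forall_weakAssocPrimes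
    (h : ∀ p ∈ weakAssocPrimes R M, ModuleCat.of R (R ⧸ p) ∈ T) : ModuleCat.of R M ∈ T := by
  refine hHC _ fun p hp => ?_
  obtain ⟨m, hm⟩ := Module.mem_support_iff'.1 hp
  have hle : Ideal.torsionOf R M m ≤ p.asIdeal := fun c hc => by
    by_contra hcp
    exact hm c hcp hc
  obtain ⟨q, hq, hqp⟩ := Ideal.exists_minimalPrimes_le hle
  exact hT.quotient_mem_of_le hqp (h q ⟨m, hq⟩)

lemma IsHalfCentered.exists_torsionBy_mem (hfin : (weakAssocPrimes R M).Finite) {s : Set R}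
    (hs : s.Finite) (h : ModuleCat.of R (Submodule.torsionBySet R M s) ∈ T) :
    ∃ x ∈ Ideal.span s, ModuleCat.of R (Submodule.torsionBy R M x) ∈ T := by
  let bad : Set (Ideal R) := {p ∈ weakAssocPrimes R M | ModuleCat.of R (R ⧸ p) ∉ T}
  have hbad : bad.Finite := hfin.subset fun _ hp => hp.1
  have hprime : ∀ p ∈ bad, p.IsPrime := fun p ⟨⟨_, hm⟩, _⟩ => hm.1.1
  have hnotsub : ¬ (Ideal.span s : Set R) ⊆ ⋃ p ∈ bad, p := by
    intro hsub
    obtain ⟨p, ⟨hpM, hpT⟩, hsp⟩ := (Ideal.subset_union_prime_finite hbad (f := id) ⊥ ⊥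
      fun p hp _ _ => hprime p hp).1 hsub
    obtain ⟨m, hms, hm⟩ := exists_torsionBySet_mem_minimalPrimes_torsionOf hpM hs
      (Ideal.span_le.1 hsp)
    refine hpT (hT.quotient_mem_of_torsionOf_le (m := ⟨m, hms⟩) h ?_)
    rw [← torsionOf_map_of_injective (Submodule.injective_subtype _)]
    exact hm.1.2
  obtain ⟨x, hxs, hx⟩ := Set.not_subset.1 hnotsub
  refine ⟨x, hxs, hHC.mem_of_forall_weakAssocPrimes hT fun p hp => ?_⟩
  by_contra hpT
  have hpM := weakAssocPrimes_subset_of_injective (Submodule.injective_subtype _) hp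
  obtain ⟨m, hm⟩ := hp
  exact hx (Set.mem_biUnion (show p ∈ bad from ⟨hpM, hpT⟩)
    (hm.1.2 ((Ideal.mem_torsionOf_iff _ _).2 (Submodule.smul_torsionBy x m))))

end TorsionTheory

section KoszulZero

variable {r : ℕ} (y : Fin r → R) (M : Type u) [AddCommGroup M] [Module R M]

lemma exists_injective_torsionBySet_koszulCohomology_zero :
    ∃ f : Submodule.torsionBySet R M (Set.range y) →ₗ[R] koszulCohomology y M 0,
      Function.Injective f := by
  let const : Submodule.torsionBySet R M (Set.range y) →ₗ[R]
      ({s : Finset (Fin r) // s.card = 0} → M) := LinearMap.pi fun _ => Submodule.subtype _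
  have hconst (m) : const m ∈ LinearMap.ker (koszulDiff y M 0) := by
    refine LinearMap.mem_ker.2 (funext fun t => Finset.sum_eq_zero fun j _ => ?_)
    have hm : y j • (m : M) = 0 :=
      (Submodule.mem_torsionBySet_iff _ _).1 m.2 ⟨_, Set.mem_range_self j.1⟩
    rw [mul_smul, LinearMap.pi_apply, Submodule.subtype_apply, hm, smul_zero]
  refine ⟨Submodule.mkQ _ ∘ₗ const.codRestrict _ hconst,
    (injective_iff_map_eq_zero _).2 fun m hm => ?_⟩
  rw [LinearMap.comp_apply, Submodule.mkQ_apply, Submodule.Quotient.mk_eq_zero,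
    range_koszulDiffIn_zero] at hm
  exact Subtype.ext (congrFun hm ⟨∅, rfl⟩)

end KoszulZero

section WeakRegularSequence
open scoped Pointwise

variable {M : Type u} [AddCommGroup M] [Module R M]

lemma map_mkQ_comap_lsmul (U : Submodule R M) (c : R) :
    (U.comap (LinearMap.lsmul R M c)).map U.mkQ = Submodule.torsionBy R (M ⧸ U) c := by
  have h : U.comap (LinearMap.lsmul R M c) = (Submodule.torsionBy R (M ⧸ U) c).comap U.mkQ := by
    ext m
    exact (Submodule.Quotient.mk_eq_zero U).symm
  rw [h, Submodule.map_comap_eq_of_surjective U.mkQ_surjective]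

lemma isWeakRegularSeqWrt_iff {T : Set (ModuleCat.{u} R)} {n : ℕ} {x : Fin n → R} :
    IsWeakRegularSeqWrt T x M ↔ ∀ i, ModuleCat.of R (Submodule.torsionBy R
      (M ⧸ Ideal.span (x '' {j | j < i}) • (⊤ : Submodule R M)) (x i)) ∈ T :=
  forall_congr' fun i => by rw [map_mkQ_comap_lsmul]

lemma span_image_cons_smul_top (x₀ : R) {n : ℕ} (x : Fin n → R) (i : Fin n) :
    Ideal.span ((Fin.cons x₀ x : Fin (n + 1) → R) '' {j | j < i.succ}) • (⊤ : Submodule R M) =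
      x₀ • ⊤ ⊔ Ideal.span (x '' {j | j < i}) • ⊤ := by
  have himage : (Fin.cons x₀ x : Fin (n + 1) → R) '' {j | j < i.succ} =
      insert x₀ (x '' {j | j < i}) := by
    ext c
    simp [Fin.exists_fin_succ, eq_comm]
  rw [himage, Ideal.span_insert, Submodule.sup_smul, Submodule.ideal_span_singleton_smul]

/-- The third isomorphism theorem for `M`, `x₀M` and `IM`; it lets weak regular sequences be peeled
off from the front. -/
def quotSMulTopQuotientEquiv (x₀ : R) (I : Ideal R) :
    (QuotSMulTop x₀ M ⧸ I • (⊤ : Submodule R (QuotSMulTop x₀ M))) ≃ₗ[R]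
      M ⧸ x₀ • (⊤ : Submodule R M) ⊔ I • ⊤ :=
  Submodule.quotEquivOfEq _ _ (by
    rw [Submodule.map_smul'', Submodule.map_top, Submodule.range_mkQ]) ≪≫ₗ
    Submodule.quotientQuotientEquivQuotientSup (x₀ • (⊤ : Submodule R M)) (I • ⊤)

lemma IsTorsionTheory.torsionBy_mem_congr {T : Set (ModuleCat.{u} R)} (hT : IsTorsionTheory R T)
    {N N' : Type u} [AddCommGroup N] [Module R N] [AddCommGroup N'] [Module R N']
    (e : N ≃ₗ[R] N') {c : R} : ModuleCat.of R (Submodule.torsionBy R N c) ∈ T ↔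
      ModuleCat.of R (Submodule.torsionBy R N' c) ∈ T := by
  have h : (Submodule.torsionBy R N' c).comap (e : N →ₗ[R] N') = Submodule.torsionBy R N c := by
    ext m
    simp [← map_smul]
  have i := (h ▸ e.ofSubmodule' (Submodule.torsionBy R N' c)).toModuleIso
  exact ⟨hT.mem_of_iso i, hT.mem_of_iso i.symm⟩

lemma IsTorsionTheory.isWeakRegularSeqWrt_cons {T : Set (ModuleCat.{u} R)}
    (hT : IsTorsionTheory R T) {n : ℕ} {x₀ : R} {x : Fin n → R} :
    IsWeakRegularSeqWrt T (Fin.cons x₀ x : Fin (n + 1) → R) M ↔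
      ModuleCat.of R (Submodule.torsionBy R M x₀) ∈ T ∧
        IsWeakRegularSeqWrt T x (QuotSMulTop x₀ M) := by
  rw [isWeakRegularSeqWrt_iff, isWeakRegularSeqWrt_iff, Fin.forall_fin_succ]
  refine and_congr (hT.torsionBy_mem_congr (Submodule.quotEquivOfEqBot _ ?_))
    (forall_congr' fun i => hT.torsionBy_mem_congr ?_)
  · simp
  · exact (Submodule.quotEquivOfEq _ _ (span_image_cons_smul_top x₀ x i)).trans
      (quotSMulTopQuotientEquiv x₀ _).symm

end WeakRegularSequence

section Grade

variable {T : Set (ModuleCat.{u} R)} {r : ℕ} {y : Fin r → R}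

lemma IsTorsionTheory.koszulHomology_mem_iff (hT : IsTorsionTheory R T) (N : ModuleCat.{u} R)
    (i : ℕ) : (koszulHomology y i).obj N ∈ T ↔ ModuleCat.of R (koszulCohomology y N i) ∈ T := by
  obtain ⟨e⟩ := nonempty_koszulHomology_iso y N i
  exact ⟨hT.mem_of_iso e, hT.mem_of_iso e.symm⟩

variable {M : Type u} [AddCommGroup M] [Module R M]

lemma natCast_le_TKgrade_iff {n : ℕ} : (n : ℕ∞) ≤ TKgrade T y M ↔
    ∀ i < n, ModuleCat.of R (koszulCohomology y M i) ∈ T := by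
  simp only [TKgrade, le_sInf_iff, Set.forall_mem_image, Set.mem_ofPred_eq, Nat.cast_le]
  exact forall_congr' fun i => by rw [← not_lt, not_imp_not]

lemma IsWeakRegularSeqWrt.koszulCohomology_mem (hT : IsTorsionTheory R T) {n : ℕ} {x : Fin n → R}
    (hx : IsWeakRegularSeqWrt T x M) (hxy : ∀ i, x i ∈ Ideal.span (Set.range y)) {i : ℕ}
    (hi : i < n) : ModuleCat.of R (koszulCohomology y M i) ∈ T := by
  induction n generalizing M i with
  | zero => exact absurd hi i.not_lt_zero
  | succ n ih =>
    rw [← Fin.cons_self_tail x, hT.isWeakRegularSeqWrt_cons] at hx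
    have := hT.isSerreClass ⟨_, hx.1⟩
    refine (hT.koszulHomology_mem_iff _ i).1
      (prop_koszulHomology_of_torsionBy_of_quotSMulTop (P := (· ∈ T)) y (hxy 0) hx.1 ?_)
    rintro j rfl
    exact (hT.koszulHomology_mem_iff _ j).2
      (ih hx.2 (fun k => hxy k.succ) (Nat.succ_lt_succ_iff.1 hi))

lemma exists_isWeakRegularSeqWrt (hT : IsTorsionTheory R T) (hHC : IsHalfCentered T)
    (hM : IsWeaklyLaskerian R M) {n : ℕ}
    (h : ∀ i < n, ModuleCat.of R (koszulCohomology y M i) ∈ T) :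
    ∃ x : Fin n → R, (∀ i, x i ∈ Ideal.span (Set.range y)) ∧ IsWeakRegularSeqWrt T x M := by
  induction n generalizing M with
  | zero => exact ⟨Fin.elim0, fun i => i.elim0, fun i => i.elim0⟩
  | succ n ih =>
    have := hT.isSerreClass ⟨_, h 0 n.succ_pos⟩
    obtain ⟨f, hf⟩ := exists_injective_torsionBySet_koszulCohomology_zero y M
    obtain ⟨x₀, hx₀, htors⟩ := hHC.exists_torsionBy_mem hT hM.finite_weakAssocPrimes
      (Set.finite_range y) (prop_of_injective (P := (· ∈ T)) hf (h 0 n.succ_pos))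
    have hquot (i) (hi : i < n) :
        ModuleCat.of R (koszulCohomology y (QuotSMulTop x₀ M) i) ∈ T :=
      (hT.koszulHomology_mem_iff _ i).1 <|
        prop_koszulHomology_quotSMulTop (P := (· ∈ T)) y htors
          ((hT.koszulHomology_mem_iff _ _).2 (h i (by omega)))
          ((hT.koszulHomology_mem_iff _ _).2 (h (i + 1) (by omega)))
    obtain ⟨x, hx, hseq⟩ := ih (hM.quotient _) hquot
    exact ⟨Fin.cons x₀ x, Fin.forall_fin_succ.2 ⟨hx₀, hx⟩,
      hT.isWeakRegularSeqWrt_cons.2 ⟨htors, hseq⟩⟩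

lemma IsTorsionTheory.tcgrade_le_tKgrade (hT : IsTorsionTheory R T) :
    Tcgrade T (Ideal.span (Set.range y)) M ≤ TKgrade T y M := by
  refine sSup_le ?_
  rintro _ ⟨n, ⟨x, hxy, hx⟩, rfl⟩
  exact natCast_le_TKgrade_iff.2 fun i hi => hx.koszulCohomology_mem hT hxy hi

lemma IsHalfCentered.tKgrade_le_tcgrade (hT : IsTorsionTheory R T) (hHC : IsHalfCentered T)
    (hM : IsWeaklyLaskerian R M) :
    TKgrade T y M ≤ Tcgrade T (Ideal.span (Set.range y)) M :=
  ENat.forall_natCast_le_iff_le.1 fun n hn =>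
    le_sSup ⟨n, exists_isWeakRegularSeqWrt hT hHC hM (natCast_le_TKgrade_iff.1 hn), rfl⟩

end Grade

/-- **Theorem.** Let `𝔗` be a half centered torsion theory, `𝔞` a finitely generated ideal
of `R` (generated by `y₁, …, y_r`) and `M` a weakly Laskerian `R`-module. Then
`𝔗-cgrade_R(𝔞, M) = 𝔗-Kgrade_R(𝔞, M)`. -/
theorem tcgrade_eq_tKgrade_of_isHalfCentered (T : Set (ModuleCat.{u} R))
    (hT : IsTorsionTheory R T) (hHC : IsHalfCentered T)
    (a : Ideal R) (M : Type u) [AddCommGroup M] [Module R M]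
    (hM : IsWeaklyLaskerian R M)
    {r : ℕ} (y : Fin r → R) (hy : Ideal.span (Set.range y) = a) :
    Tcgrade T a M = TKgrade T y M := by
  subst hy
  exact le_antisymm hT.tcgrade_le_tKgrade (hHC.tKgrade_le_tcgrade hT hM)
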